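/- Let R_{abcd} have Riemann symmetries on Minkowski space and let B_{abcd} be its Bel tensor. Then B_{abcd} satisfies the generalized dominant property: if u₁^a, u₂^a, u₃^a, u₄^a are arbitrary causal future-directed vectors then B_{abcd} u₁^a u₂^b u₃^c u₄^d ≥ 0. -/

import Mathlib

noncomputable section

/-- The Minkowski metric `diag(-1,1,1,1)` on `ℝ⁴`. -/
def gm : Fin 4 → Fin 4 → ℝ := fun a b => if a = b then (if a = 0 then -1 else 1) else 0

/-- The totally antisymmetric volume form with `η₀₁₂₃ = 1`. -/
def eta (a b c d : Fin 4) : ℝ :=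
  ((((b.val : ℤ) - a.val).sign * ((c.val : ℤ) - a.val).sign * ((d.val : ℤ) - a.val).sign *
    ((c.val : ℤ) - b.val).sign * ((d.val : ℤ) - b.val).sign * ((d.val : ℤ) - c.val).sign : ℤ) : ℝ)

/-- Index lowering: `n_a = g_{ab} n^b`. -/
def lo (n : Fin 4 → ℝ) (a : Fin 4) : ℝ := ∑ b, gm a b * n b

/-- Spatial metric `h_{ab} = g_{ab} + n_a n_b`. -/
def hm (n : Fin 4 → ℝ) (a b : Fin 4) : ℝ := gm a b + lo n a * lo n b

/-- Spatial volume form `ε_{abc} = n^d η_{dabc}` of a unit timelike `n`. -/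
def eps (n : Fin 4 → ℝ) (a b c : Fin 4) : ℝ := ∑ d, n d * eta d a b c

/-- A rank-4 tensor. -/
abbrev Tensor4 := Fin 4 → Fin 4 → Fin 4 → Fin 4 → ℝ

/-- `R_{abcd}` has the symmetries of a Riemann tensor. -/
structure RiemannSymm (R : Tensor4) : Prop where
  antisymm₁ : ∀ a b c d, R a b c d = - R b a c d
  antisymm₂ : ∀ a b c d, R a b c d = - R a b d c
  pairSymm : ∀ a b c d, R a b c d = R c d a b
  firstBianchi : ∀ a b c d,
    (1/6 : ℝ) * (R a b c d + R b c a d + R c a b d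
      - R b a c d - R a c b d - R c b a d) = 0

/-- Left dual `*R_{abcd} = ½ η_{abpq} R^{pq}{}_{cd}`. -/
def dualL (R : Tensor4) (a b c d : Fin 4) : ℝ :=
  (1/2) * ∑ p, ∑ q, eta a b p q * (∑ r, ∑ s, gm p r * gm q s * R r s c d)

/-- Right dual `R*_{abcd} = ½ η_{pqcd} R_{ab}{}^{pq}`. -/
def dualR (R : Tensor4) (a b c d : Fin 4) : ℝ :=
  (1/2) * ∑ p, ∑ q, eta p q c d * (∑ r, ∑ s, gm p r * gm q s * R a b r s)

/-- Double dual `*R*_{abcd} = ½ η_{ab}{}^{pq} R*_{pqcd}`. -/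
def dualLR (R : Tensor4) : Tensor4 := dualL (dualR R)

/-- `Y_{ac} = R_{abcd} n^b n^d`. -/
def Yt (R : Tensor4) (n : Fin 4 → ℝ) (a c : Fin 4) : ℝ := ∑ b, ∑ d, R a b c d * n b * n d

/-- `Z_{ac} = *R_{abcd} n^b n^d`. -/
def Zt (R : Tensor4) (n : Fin 4 → ℝ) (a c : Fin 4) : ℝ := ∑ b, ∑ d, dualL R a b c d * n b * n d

/-- `X_{ac} = *R*_{abcd} n^b n^d`. -/
def Xt (R : Tensor4) (n : Fin 4 → ℝ) (a c : Fin 4) : ℝ := ∑ b, ∑ d, dualLR R a b c d * n b * n d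

/-- Double contraction `A_{apcq} B_b{}^p{}_d{}^q` (indices raised with `gm`). -/
def q2 (A B : Tensor4) (a b c d : Fin 4) : ℝ :=
  ∑ p, ∑ q, ∑ r, ∑ s, A a p c q * gm p r * gm q s * B b r d s

/-- Triple contraction `A_{aefp} B_b{}^{efp}`. -/
def q3 (A B : Tensor4) (a b : Fin 4) : ℝ :=
  ∑ e, ∑ f, ∑ p, ∑ r, ∑ s, ∑ t, A a e f p * gm e r * gm f s * gm p t * B b r s t

/-- Full contraction `A_{efph} B^{efph}`. -/
def q4 (A B : Tensor4) : ℝ :=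
  ∑ e, ∑ f, ∑ p, ∑ h, ∑ r, ∑ s, ∑ t, ∑ u,
    A e f p h * gm e r * gm f s * gm p t * gm h u * B r s t u

/-- The Bel tensor of `R`:
`B_{abcd} = R_{aecf} R_b{}^e{}_d{}^f − ½ g_{cd} R_{aefp} R_b{}^{efp} − ½ g_{ab} R_{cefp} R_d{}^{efp}`
`+ R_b{}^e{}_c{}^f R_{dfae} + ⅛ g_{ab} g_{cd} R_{efph} R^{efph}`. -/
def Bel (R : Tensor4) (a b c d : Fin 4) : ℝ :=
  q2 R R a b c d
  - (1/2) * gm c d * q3 R R a b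
  - (1/2) * gm a b * q3 R R c d
  + (∑ e, ∑ f, ∑ r, ∑ s, gm e r * gm f s * R b r c s * R d f a e)
  + (1/8) * gm a b * gm c d * q4 R R


/-- Diagonal entries of the Minkowski metric. -/
def sg (a : Fin 4) : ℝ := if a = 0 then -1 else 1

lemma gm_eq (a b : Fin 4) : gm a b = if a = b then sg a else 0 := rfl

/-- Two future causal (co)vectors pair nonnegatively. -/
lemma causal_pair (a0 a1 a2 a3 b0 b1 b2 b3 : ℝ) (ha : 0 ≤ a0) (hb : 0 ≤ b0)
    (ha2 : a1 ^ 2 + a2 ^ 2 + a3 ^ 2 ≤ a0 ^ 2) (hb2 : b1 ^ 2 + b2 ^ 2 + b3 ^ 2 ≤ b0 ^ 2) :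
    0 ≤ a0 * b0 + (a1 * b1 + a2 * b2 + a3 * b3) := by
  have h1 : (a1 * b1 + a2 * b2 + a3 * b3) ^ 2 ≤ (a0 * b0) ^ 2 := by
    have h2 : (a1 * b1 + a2 * b2 + a3 * b3) ^ 2
        ≤ (a1 ^ 2 + a2 ^ 2 + a3 ^ 2) * (b1 ^ 2 + b2 ^ 2 + b3 ^ 2) := by
      nlinarith [sq_nonneg (a1 * b2 - a2 * b1), sq_nonneg (a1 * b3 - a3 * b1),
        sq_nonneg (a2 * b3 - a3 * b2)]
    have h3 : (a1 ^ 2 + a2 ^ 2 + a3 ^ 2) * (b1 ^ 2 + b2 ^ 2 + b3 ^ 2) ≤ a0 ^ 2 * b0 ^ 2 :=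
      mul_le_mul ha2 hb2 (by positivity) (by positivity)
    rw [mul_pow]; exact h2.trans h3
  have h4 := abs_le_of_sq_le_sq' h1 (mul_nonneg ha hb)
  linarith [h4.1]

/-- Polarised superenergy (energy-momentum) form of 2-forms. -/
def TT (u v : Fin 4 → ℝ) (F G : Fin 4 → Fin 4 → ℝ) : ℝ :=
  (1/2) * (∑ a, ∑ b, ∑ e, u a * v b * sg e * (F a e * G b e + G a e * F b e))
  - (1/4) * (∑ a, sg a * u a * v a) * (∑ a, ∑ b, sg a * sg b * F a b * G a b)

set_option maxHeartbeats 4000000 in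
lemma TT_nonneg (u v : Fin 4 → ℝ) (F : Fin 4 → Fin 4 → ℝ) (hF : ∀ a b, F a b = - F b a)
    (hu : u 1 ^ 2 + u 2 ^ 2 + u 3 ^ 2 ≤ u 0 ^ 2) (hu0 : 0 ≤ u 0)
    (hv : v 1 ^ 2 + v 2 ^ 2 + v 3 ^ 2 ≤ v 0 ^ 2) (hv0 : 0 ≤ v 0) :
    0 ≤ TT u v F F := by
  have d (a) : F a a = 0 := by linarith [hF a a]
  obtain ⟨x, hx⟩ : ∃ x, x = F 0 1 := ⟨_, rfl⟩
  obtain ⟨y, hy⟩ : ∃ x, x = F 0 2 := ⟨_, rfl⟩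
  obtain ⟨z, hz⟩ : ∃ x, x = F 0 3 := ⟨_, rfl⟩
  obtain ⟨p, hp⟩ : ∃ x, x = F 2 3 := ⟨_, rfl⟩
  obtain ⟨q, hq⟩ : ∃ x, x = F 3 1 := ⟨_, rfl⟩
  obtain ⟨r, hr⟩ : ∃ x, x = F 1 2 := ⟨_, rfl⟩
  obtain ⟨u0, hu0'⟩ : ∃ x, x = u 0 := ⟨_, rfl⟩
  obtain ⟨u1, hu1'⟩ : ∃ x, x = u 1 := ⟨_, rfl⟩
  obtain ⟨u2, hu2'⟩ : ∃ x, x = u 2 := ⟨_, rfl⟩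
  obtain ⟨u3, hu3'⟩ : ∃ x, x = u 3 := ⟨_, rfl⟩
  -- symmetric tensor components
  obtain ⟨t, ht⟩ : ∃ t, t = (x^2+y^2+z^2+p^2+q^2+r^2)/2 := ⟨_, rfl⟩
  obtain ⟨s1, hs1⟩ : ∃ t, t = (y*r-z*q) := ⟨_, rfl⟩
  obtain ⟨s2, hs2⟩ : ∃ t, t = (z*p-x*r) := ⟨_, rfl⟩
  obtain ⟨s3, hs3⟩ : ∃ t, t = (x*q-y*p) := ⟨_, rfl⟩
  have ht0 : 0 ≤ t := by rw [ht]; positivity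
  have hS : s1^2+s2^2+s3^2 ≤ t^2 := by
    have : t^2 - (s1^2+s2^2+s3^2) =
        ((x^2+y^2+z^2-p^2-q^2-r^2)/2)^2 + (x*p+y*q+z*r)^2 := by subst_vars; ring
    nlinarith [sq_nonneg ((x^2+y^2+z^2-p^2-q^2-r^2)/2), sq_nonneg (x*p+y*q+z*r)]
  rw [← hu0', ← hu1', ← hu2', ← hu3'] at hu
  rw [← hu0'] at hu0
  have hw0 := causal_pair t s1 s2 s3 u0 u1 u2 u3 ht0 hu0 hS hu
  set w0 := t*u0 + (s1*u1+s2*u2+s3*u3) with hw0d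
  obtain ⟨w1, hw1⟩ : ∃ w, w = s1*u0 + (t-x^2-p^2)*u1 - (x*y+p*q)*u2 - (x*z+p*r)*u3 := ⟨_, rfl⟩
  obtain ⟨w2, hw2⟩ : ∃ w, w = s2*u0 + (t-y^2-q^2)*u2 - (x*y+p*q)*u1 - (y*z+q*r)*u3 := ⟨_, rfl⟩
  obtain ⟨w3, hw3⟩ : ∃ w, w = s3*u0 + (t-z^2-r^2)*u3 - (y*z+q*r)*u2 - (x*z+p*r)*u1 := ⟨_, rfl⟩
  have hW : w1^2+w2^2+w3^2 ≤ w0^2 := by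
    have : w0^2 - (w1^2+w2^2+w3^2) =
        (((x^2+y^2+z^2-p^2-q^2-r^2)/2)^2 + (x*p+y*q+z*r)^2) * (u0^2-(u1^2+u2^2+u3^2)) := by
      rw [hw0d, hw1, hw2, hw3, ht, hs1, hs2, hs3]; ring
    have h2 : 0 ≤ (((x^2+y^2+z^2-p^2-q^2-r^2)/2)^2 + (x*p+y*q+z*r)^2) * (u0^2-(u1^2+u2^2+u3^2)) :=
      mul_nonneg (by positivity) (by linarith)
    linarith
  have hfin := causal_pair w0 w1 w2 w3 (v 0) (v 1) (v 2) (v 3) hw0 hv0 hW hv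
  convert hfin using 1
  rw [hw0d, hw1, hw2, hw3, ht, hs1, hs2, hs3]
  simp only [TT, Fin.sum_univ_four, d, hF 1 0, hF 2 0, hF 3 0, hF 3 2, hF 1 3, hF 2 1,
    ← hx, ← hy, ← hz, ← hp, ← hq, ← hr, ← hu0', ← hu1', ← hu2', ← hu3', sg]
  simp
  ring

/-- Antisymmetrisation. -/
def asym (x : Fin 4 × Fin 4 → ℝ) (a b : Fin 4) : ℝ := (x (a, b) - x (b, a)) / 2

/-- `TT` as a bilinear form on all of `ℝ¹⁶`. -/
def TB (u v : Fin 4 → ℝ) : (Fin 4 × Fin 4 → ℝ) →ₗ[ℝ] (Fin 4 × Fin 4 → ℝ) →ₗ[ℝ] ℝ :=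
  LinearMap.mk₂ ℝ (fun x y => TT u v (asym x) (asym y))
    (by intro x y z; simp only [TT, asym, Fin.sum_univ_four, Pi.add_apply]; ring)
    (by intro c x y; simp only [TT, asym, Fin.sum_univ_four, Pi.smul_apply, smul_eq_mul]; ring)
    (by intro x y z; simp only [TT, asym, Fin.sum_univ_four, Pi.add_apply]; ring)
    (by intro c x y; simp only [TT, asym, Fin.sum_univ_four, Pi.smul_apply, smul_eq_mul]; ring)

lemma TT_comm (u v : Fin 4 → ℝ) (F G : Fin 4 → Fin 4 → ℝ) : TT u v F G = TT u v G F := by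
  unfold TT
  congr 2
  · refine Finset.sum_congr rfl fun a _ => Finset.sum_congr rfl fun b _ =>
      Finset.sum_congr rfl fun e _ => by ring
  · refine Finset.sum_congr rfl fun a _ => Finset.sum_congr rfl fun b _ => by ring

open scoped MatrixOrder Matrix.Norms.L2Operator in
lemma TT_sos (u v : Fin 4 → ℝ)
    (hu : u 1 ^ 2 + u 2 ^ 2 + u 3 ^ 2 ≤ u 0 ^ 2) (hu0 : 0 ≤ u 0)
    (hv : v 1 ^ 2 + v 2 ^ 2 + v 3 ^ 2 ≤ v 0 ^ 2) (hv0 : 0 ≤ v 0) :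
    ∃ m : Matrix (Fin 4 × Fin 4) (Fin 4 × Fin 4) ℝ, ∀ F G : Fin 4 → Fin 4 → ℝ,
      (∀ a b, F a b = - F b a) → (∀ a b, G a b = - G b a) →
      TT u v F G = ∑ j, (∑ k, m j k * F k.1 k.2) * (∑ k, m j k * G k.1 k.2) := by
  have hM : ∀ x y, TB u v x y = x ⬝ᵥ (LinearMap.toMatrix₂' ℝ (TB u v)).mulVec y := by
    intro x y
    rw [← Matrix.toLinearMap₂'_apply' , Matrix.toLinearMap₂'_toMatrix']
  have hpsd : (LinearMap.toMatrix₂' ℝ (TB u v)).PosSemidef := by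
    refine Matrix.PosSemidef.of_dotProduct_mulVec_nonneg ?_ ?_
    · ext i j
      simp only [Matrix.conjTranspose_apply, LinearMap.toMatrix₂'_apply, star_trivial]
      exact TT_comm _ _ _ _
    · intro x
      rw [star_trivial, ← hM]
      exact TT_nonneg u v _ (fun a b => by unfold asym; ring) hu hu0 hv hv0
  obtain ⟨m, hm⟩ : ∃ m : Matrix (Fin 4 × Fin 4) (Fin 4 × Fin 4) ℝ,
      LinearMap.toMatrix₂' ℝ (TB u v) = m.conjTranspose * m :=
    CStarAlgebra.nonneg_iff_eq_star_mul_self.mp hpsd.nonneg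
  refine ⟨m, fun F G hF hG => ?_⟩
  have h := hM (fun k => F k.1 k.2) (fun k => G k.1 k.2)
  have e1 : asym (fun k => F k.1 k.2) = F := by
    funext a b; simp only [asym]; linarith [hF a b]
  have e2 : asym (fun k => G k.1 k.2) = G := by
    funext a b; simp only [asym]; linarith [hG a b]
  have h0 : TB u v (fun k => F k.1 k.2) (fun k => G k.1 k.2) = TT u v F G := by
    simp only [TB, LinearMap.mk₂_apply, e1, e2]
  rw [← h0, h, hm, ← Matrix.mulVec_mulVec, Matrix.dotProduct_mulVec,
    Matrix.conjTranspose_eq_transpose_of_trivial, Matrix.vecMul_transpose]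
  rfl

lemma causal_of (u : Fin 4 → ℝ) (h : (∑ a, ∑ b, gm a b * u a * u b) ≤ 0) :
    u 1 ^ 2 + u 2 ^ 2 + u 3 ^ 2 ≤ u 0 ^ 2 := by
  simp [gm, Fin.sum_univ_four] at h
  linarith

lemma gm_sum (a : Fin 4) (f : Fin 4 → ℝ) : ∑ b, gm a b * f b = sg a * f a := by
  simp [gm_eq]

lemma q2_eq (R : Tensor4) (a b c d : Fin 4) :
    q2 R R a b c d = ∑ p, ∑ q, sg p * sg q * (R a p c q * R b p d q) := by
  unfold q2
  refine Finset.sum_congr rfl fun p _ => Finset.sum_congr rfl fun q _ => ?_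
  have : ∀ r s, R a p c q * gm p r * gm q s * R b r d s
      = gm p r * (gm q s * (R a p c q * R b r d s)) := fun r s => by ring
  simp only [this, ← Finset.mul_sum, gm_sum]
  ring

lemma q3_eq (R : Tensor4) (a b : Fin 4) :
    q3 R R a b = ∑ e, ∑ f, ∑ p, sg e * sg f * sg p * (R a e f p * R b e f p) := by
  unfold q3
  refine Finset.sum_congr rfl fun e _ => Finset.sum_congr rfl fun f _ =>
    Finset.sum_congr rfl fun p _ => ?_
  have : ∀ r s t, R a e f p * gm e r * gm f s * gm p t * R b r s t
      = gm e r * (gm f s * (gm p t * (R a e f p * R b r s t))) := fun r s t => by ring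
  simp only [this, ← Finset.mul_sum, gm_sum]
  ring

lemma q4_eq (R : Tensor4) :
    q4 R R = ∑ e, ∑ f, ∑ p, ∑ h, sg e * sg f * sg p * sg h * (R e f p h * R e f p h) := by
  unfold q4
  refine Finset.sum_congr rfl fun e _ => Finset.sum_congr rfl fun f _ =>
    Finset.sum_congr rfl fun p _ => Finset.sum_congr rfl fun h _ => ?_
  have : ∀ r s t u, R e f p h * gm e r * gm f s * gm p t * gm h u * R r s t u
      = gm e r * (gm f s * (gm p t * (gm h u * (R e f p h * R r s t u)))) :=
    fun r s t u => by ring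
  simp only [this, ← Finset.mul_sum, gm_sum]
  ring

lemma q5_eq (R : Tensor4) (hR : RiemannSymm R) (a b c d : Fin 4) :
    (∑ e, ∑ f, ∑ r, ∑ s, gm e r * gm f s * R b r c s * R d f a e)
      = ∑ e, ∑ f, sg e * sg f * (R b e c f * R a e d f) := by
  refine Finset.sum_congr rfl fun e _ => Finset.sum_congr rfl fun f _ => ?_
  have : ∀ r s, gm e r * gm f s * R b r c s * R d f a e
      = gm e r * (gm f s * (R b r c s * R d f a e)) := fun r s => by ring
  simp only [this, ← Finset.mul_sum, gm_sum]
  rw [hR.pairSymm d f a e]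
  ring

lemma q3_eq' (R : Tensor4) (hR : RiemannSymm R) (c d : Fin 4) :
    q3 R R c d = ∑ e, ∑ f, ∑ p, sg e * sg f * sg p * (R e f c p * R e f d p) := by
  rw [q3_eq, Finset.sum_comm]
  refine Finset.sum_congr rfl fun f _ => ?_
  rw [Finset.sum_comm]
  refine Finset.sum_congr rfl fun p _ => Finset.sum_congr rfl fun e _ => ?_
  rw [hR.pairSymm c e f p, hR.pairSymm d e f p]
  ring

lemma TT_eq (u v : Fin 4 → ℝ) (F G : Fin 4 → Fin 4 → ℝ) :
    TT u v F G = ∑ c, ∑ d, u c * v d * (∑ e, (1/2) * (sg e * (F c e * G d e + G c e * F d e))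
      - (1/4) * gm c d * ∑ a, ∑ b, sg a * sg b * (F a b * G a b)) := by
  have h : ∑ a, sg a * u a * v a = ∑ c, ∑ d, u c * v d * gm c d := by
    refine Finset.sum_congr rfl fun c _ => ?_
    have : ∀ d, u c * v d * gm c d = gm c d * (u c * v d) := fun d => by ring
    simp only [this, gm_sum]
    ring
  unfold TT
  rw [h]
  simp only [mul_sub, Finset.sum_sub_distrib]
  congr 1
  · simp only [Finset.mul_sum]
    refine Finset.sum_congr rfl fun a _ => Finset.sum_congr rfl fun b _ =>
      Finset.sum_congr rfl fun e _ => by ring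
  · have : ∀ a b, sg a * sg b * F a b * G a b = sg a * sg b * (F a b * G a b) :=
      fun a b => by ring
    simp only [this]
    generalize ∑ a, ∑ b, sg a * sg b * (F a b * G a b) = X
    simp only [Finset.mul_sum, Finset.sum_mul]
    refine Finset.sum_congr rfl fun a _ => Finset.sum_congr rfl fun b _ => by ring

/-- Component of the energy form. -/
def tc (c d : Fin 4) (F G : Fin 4 → Fin 4 → ℝ) : ℝ :=
  (∑ e, (1/2) * (sg e * (F c e * G d e + G c e * F d e)))
      - (1/4) * gm c d * ∑ a, ∑ b, sg a * sg b * (F a b * G a b)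

lemma Bel_eq (R : Tensor4) (hR : RiemannSymm R) (a b c d : Fin 4) :
    Bel R a b c d =
      2 * ((∑ e, sg e * tc c d (R a e) (R b e))
      - (1/4) * gm a b * (∑ e, ∑ f, sg e * sg f * tc c d (R e f) (R e f))) := by
  unfold Bel
  rw [q2_eq, q3_eq R a b, q3_eq' R hR, q4_eq, q5_eq R hR]
  unfold tc
  have e1 : (∑ e, sg e * ((∑ f, (1/2) * (sg f * (R a e c f * R b e d f + R b e c f * R a e d f)))
      - (1/4) * gm c d * ∑ f, ∑ p, sg f * sg p * (R a e f p * R b e f p)))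
      = (1/2) * (∑ p, ∑ q, sg p * sg q * (R a p c q * R b p d q))
        + (1/2) * (∑ e, ∑ f, sg e * sg f * (R b e c f * R a e d f))
        - (1/4) * gm c d * ∑ e, ∑ f, ∑ p, sg e * sg f * sg p * (R a e f p * R b e f p) := by
    simp only [Finset.mul_sum, mul_sub, Finset.sum_sub_distrib]
    rw [← Finset.sum_add_distrib]
    congr 1
    · refine Finset.sum_congr rfl fun e _ => ?_
      rw [← Finset.sum_add_distrib]
      refine Finset.sum_congr rfl fun f _ => by ring
    · refine Finset.sum_congr rfl fun e _ => Finset.sum_congr rfl fun f _ =>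
        Finset.sum_congr rfl fun p _ => by ring
  have e2 : (∑ e, ∑ f, sg e * sg f *
      ((∑ p, (1/2) * (sg p * (R e f c p * R e f d p + R e f c p * R e f d p)))
      - (1/4) * gm c d * ∑ p, ∑ q, sg p * sg q * (R e f p q * R e f p q)))
      = (∑ e, ∑ f, ∑ p, sg e * sg f * sg p * (R e f c p * R e f d p))
        - (1/4) * gm c d * ∑ e, ∑ f, ∑ p, ∑ h,
          sg e * sg f * sg p * sg h * (R e f p h * R e f p h) := by
    simp only [Finset.mul_sum, mul_sub, Finset.sum_sub_distrib]
    congr 1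
    · refine Finset.sum_congr rfl fun e _ => Finset.sum_congr rfl fun f _ =>
        Finset.sum_congr rfl fun p _ => by ring
    · refine Finset.sum_congr rfl fun e _ => Finset.sum_congr rfl fun f _ =>
        Finset.sum_congr rfl fun p _ => Finset.sum_congr rfl fun h _ => by ring
  rw [e1, e2]
  ring

lemma Bel_sum (R : Tensor4) (hR : RiemannSymm R) (u₁ u₂ u₃ u₄ : Fin 4 → ℝ) :
    ∑ a, ∑ b, ∑ c, ∑ d, Bel R a b c d * u₁ a * u₂ b * u₃ c * u₄ d =
    2 * ((∑ a, ∑ b, ∑ e, u₁ a * u₂ b * sg e * TT u₃ u₄ (R a e) (R b e))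
      - (1/4) * (∑ a, sg a * u₁ a * u₂ a) * (∑ a, ∑ b, sg a * sg b * TT u₃ u₄ (R a b) (R a b))) := by
  have hT : ∀ F G, TT u₃ u₄ F G = ∑ c, ∑ d, u₃ c * u₄ d * tc c d F G := TT_eq u₃ u₄
  have h : ∑ a, sg a * u₁ a * u₂ a = ∑ c, ∑ d, u₁ c * u₂ d * gm c d := by
    refine Finset.sum_congr rfl fun c _ => ?_
    have : ∀ d, u₁ c * u₂ d * gm c d = gm c d * (u₁ c * u₂ d) := fun d => by ring
    simp only [this, gm_sum]
    ring
  have hA : ∀ a b, ∑ e, u₁ a * u₂ b * sg e * TT u₃ u₄ (R a e) (R b e)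
      = ∑ c, ∑ d, u₁ a * u₂ b * u₃ c * u₄ d * ∑ e, sg e * tc c d (R a e) (R b e) := by
    intro a b
    simp only [hT, Finset.mul_sum]
    rw [Finset.sum_comm]
    refine Finset.sum_congr rfl fun c _ => ?_
    rw [Finset.sum_comm]
    refine Finset.sum_congr rfl fun d _ => Finset.sum_congr rfl fun e _ => by ring
  have hC : (∑ a, ∑ b, sg a * sg b * TT u₃ u₄ (R a b) (R a b))
      = ∑ c, ∑ d, u₃ c * u₄ d * ∑ e, ∑ f, sg e * sg f * tc c d (R e f) (R e f) := by
    have h1 : ∀ c d, u₃ c * u₄ d * ∑ e, ∑ f, sg e * sg f * tc c d (R e f) (R e f)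
      = ∑ x : Fin 4 × Fin 4, u₃ c * u₄ d * (sg x.1 * sg x.2 * tc c d (R x.1 x.2) (R x.1 x.2)) := by
      intro c d
      rw [← Finset.mul_sum, Fintype.sum_prod_type]
    simp only [h1]
    rw [← Fintype.sum_prod_type' (f := fun a b => sg a * sg b * TT u₃ u₄ (R a b) (R a b))]
    simp only [hT, Finset.mul_sum]
    rw [Finset.sum_comm]
    refine Finset.sum_congr rfl fun c _ => ?_
    rw [Finset.sum_comm]
    refine Finset.sum_congr rfl fun d _ => Finset.sum_congr rfl fun e _ => by ring
  rw [hC, h]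
  simp only [hA, Bel_eq R hR]
  rw [mul_sub, mul_assoc, Finset.sum_mul, Finset.mul_sum, Finset.mul_sum, Finset.mul_sum,
    ← Finset.sum_sub_distrib]
  refine Finset.sum_congr rfl fun a _ => ?_
  rw [Finset.sum_mul, Finset.mul_sum, Finset.mul_sum, Finset.mul_sum, ← Finset.sum_sub_distrib]
  refine Finset.sum_congr rfl fun b _ => ?_
  rw [Finset.mul_sum, Finset.mul_sum, Finset.mul_sum, Finset.mul_sum, ← Finset.sum_sub_distrib]
  refine Finset.sum_congr rfl fun c _ => ?_
  rw [Finset.mul_sum, Finset.mul_sum, Finset.mul_sum, Finset.mul_sum, ← Finset.sum_sub_distrib]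
  refine Finset.sum_congr rfl fun d _ => ?_
  ring

/-- The Bel tensor satisfies the generalized dominant property: it is nonnegative when
contracted with four causal future-directed vectors. -/
theorem bel_tensor_generalized_dominant_property
    (R : Tensor4) (hR : RiemannSymm R)
    (u₁ u₂ u₃ u₄ : Fin 4 → ℝ)
    (h₁0 : u₁ ≠ 0) (h₁c : (∑ a, ∑ b, gm a b * u₁ a * u₁ b) ≤ 0) (h₁f : 0 < u₁ 0)
    (h₂0 : u₂ ≠ 0) (h₂c : (∑ a, ∑ b, gm a b * u₂ a * u₂ b) ≤ 0) (h₂f : 0 < u₂ 0)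
    (h₃0 : u₃ ≠ 0) (h₃c : (∑ a, ∑ b, gm a b * u₃ a * u₃ b) ≤ 0) (h₃f : 0 < u₃ 0)
    (h₄0 : u₄ ≠ 0) (h₄c : (∑ a, ∑ b, gm a b * u₄ a * u₄ b) ≤ 0) (h₄f : 0 < u₄ 0) :
    0 ≤ ∑ a, ∑ b, ∑ c, ∑ d, Bel R a b c d * u₁ a * u₂ b * u₃ c * u₄ d := by
  obtain ⟨m, hm⟩ := TT_sos u₃ u₄ (causal_of _ h₃c) h₃f.le (causal_of _ h₄c) h₄f.le
  have key : ∑ a, ∑ b, ∑ c, ∑ d, Bel R a b c d * u₁ a * u₂ b * u₃ c * u₄ d =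
      2 * ∑ j, TT u₁ u₂ (fun a e => ∑ k, m j k * R a e k.1 k.2)
        (fun a e => ∑ k, m j k * R a e k.1 k.2) := by
    rw [Bel_sum R hR]
    have hT : ∀ a e b f, TT u₃ u₄ (R a e) (R b f) =
        ∑ j, (∑ k, m j k * R a e k.1 k.2) * (∑ k, m j k * R b f k.1 k.2) :=
      fun a e b f => hm _ _ (hR.antisymm₂ a e) (hR.antisymm₂ b f)
    simp only [hT]
    generalize hF : (fun (j : Fin 4 × Fin 4) (a e : Fin 4) => ∑ k, m j k * R a e k.1 k.2) = F
    have hF' : ∀ j a e, ∑ k, m j k * R a e k.1 k.2 = F j a e := by intros; rw [← hF]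
    simp only [hF', TT]
    rw [Finset.sum_sub_distrib, ← Finset.mul_sum, ← Finset.mul_sum]
    congr 2
    · rw [Finset.sum_comm, Finset.mul_sum]
      simp only [Finset.mul_sum]
      rw [Finset.sum_comm]
      rw [Finset.sum_comm (s := (Finset.univ : Finset (Fin 4 × Fin 4)))]
      refine Finset.sum_congr rfl fun a _ => ?_
      rw [Finset.sum_comm (s := (Finset.univ : Finset (Fin 4 × Fin 4)))]
      refine Finset.sum_congr rfl fun b _ => ?_
      rw [Finset.sum_comm (s := (Finset.univ : Finset (Fin 4 × Fin 4)))]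
      refine Finset.sum_congr rfl fun e _ => ?_
      refine Finset.sum_congr rfl fun j _ => ?_
      ring
    · congr 1
      simp only [Finset.mul_sum]
      rw [Finset.sum_comm (s := (Finset.univ : Finset (Fin 4 × Fin 4)))]
      refine Finset.sum_congr rfl fun a _ => ?_
      rw [Finset.sum_comm (s := (Finset.univ : Finset (Fin 4 × Fin 4)))]
      refine Finset.sum_congr rfl fun b _ => ?_
      refine Finset.sum_congr rfl fun j _ => ?_
      ring
  rw [key]
  refine mul_nonneg (by norm_num) (Finset.sum_nonneg fun j _ => ?_)
  refine TT_nonneg u₁ u₂ _ (fun a b => ?_) (causal_of _ h₁c) h₁f.le (causal_of _ h₂c) h₂f.le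
  rw [← Finset.sum_neg_distrib]
  refine Finset.sum_congr rfl fun k _ => ?_
  rw [hR.antisymm₁ a b]; ring
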